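/- arXiv:2605.26610 — 3 statements merged into one kernel-verified Lean document; each statement's English description precedes it below -/
import Mathlib

section
/- Let F > 0. Define the standard normal pdf φ(x) = exp(−x²/2)/√(2π) and cdf N(x) = ∫_{−∞}^x φ(u) du. For k ∈ ℝ and w > 0 set d₊(k,w) = −k/√w + √w/2, d₋(k,w) = −k/√w − √w/2, and C_BS(k,w) = F·(N(d₊(k,w)) − exp(k)·N(d₋(k,w))). Let w : ℝ → ℝ be twice differentiable with w(k) > 0 for all k, define the slice C(k) := C_BS(k, w(k)) and the Durrleman function g(k) := (1 − k·w′(k)/(2·w(k)))² − (w′(k)²/4)·(1/w(k) + 1/4) + w″(k)/2. Then C is twice differentiable and C″(k) − C′(k) = (F·φ(d₊(k,w(k)))/√(w(k)))·g(k) for every k ∈ ℝ. -/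
open MeasureTheory

/-- Standard normal pdf. -/
noncomputable def gauss (x : ℝ) : ℝ := Real.exp (-x ^ 2 / 2) / Real.sqrt (2 * Real.pi)

/-- Standard normal cdf. -/
noncomputable def normCdf (x : ℝ) : ℝ := ∫ u in Set.Iic x, gauss u

/-- Black–Scholes `d₊` in log-moneyness `k` and total variance `w`. -/
noncomputable def dplus (k w : ℝ) : ℝ := -k / Real.sqrt w + Real.sqrt w / 2

/-- Black–Scholes `d₋` in log-moneyness `k` and total variance `w`. -/
noncomputable def dminus (k w : ℝ) : ℝ := -k / Real.sqrt w - Real.sqrt w / 2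

/-- Undiscounted forward Black–Scholes call price. -/
noncomputable def CBS (F k w : ℝ) : ℝ :=
  F * (normCdf (dplus k w) - Real.exp k * normCdf (dminus k w))

theorem continuous_gauss : Continuous gauss := by
  unfold gauss
  fun_prop

theorem integrable_gauss : Integrable gauss := by
  have h := (integrable_exp_neg_mul_sq (b := 1 / 2) (by norm_num)).div_const (Real.sqrt (2 * Real.pi))
  refine h.congr (Filter.Eventually.of_forall fun x => ?_)
  simp only [gauss]
  congr 2
  ring

theorem hasDerivAt_gauss (x : ℝ) : HasDerivAt gauss (-x * gauss x) x := by
  have h := ((((hasDerivAt_id x).pow 2).neg.div_const 2).exp).div_const (Real.sqrt (2 * Real.pi))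
  refine h.congr_deriv ?_
  simp [gauss]
  ring

theorem hasDerivAt_normCdf (x : ℝ) : HasDerivAt normCdf (gauss x) x := by
  have h : normCdf = fun y => (∫ u in (0 : ℝ)..y, gauss u) + normCdf 0 := by
    funext y
    rw [← intervalIntegral.integral_Iic_sub_Iic integrable_gauss.integrableOn
      integrable_gauss.integrableOn]
    simp [normCdf]
  rw [h]
  exact (intervalIntegral.integral_hasDerivAt_right
    (continuous_gauss.intervalIntegrable _ _)
    continuous_gauss.stronglyMeasurable.stronglyMeasurableAtFilter
    continuous_gauss.continuousAt).add_const _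

/-- Durrleman factorization of the slice `C(k) = C_BS(k, w(k))`:
`C″(k) − C′(k) = (F·φ(d₊(k,w(k)))/√(w(k)))·g(k)`. -/
theorem durrleman_slice_factorization (F : ℝ) (hF : 0 < F)
    (w : ℝ → ℝ) (hw1 : Differentiable ℝ w) (hw2 : Differentiable ℝ (deriv w))
    (hwpos : ∀ k, 0 < w k) :
    Differentiable ℝ (fun k : ℝ => CBS F k (w k)) ∧
    Differentiable ℝ (deriv (fun k : ℝ => CBS F k (w k))) ∧
    ∀ k : ℝ,
      deriv (deriv (fun k : ℝ => CBS F k (w k))) k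
        - deriv (fun k : ℝ => CBS F k (w k)) k
      = F * gauss (dplus k (w k)) / Real.sqrt (w k) *
          ((1 - k * deriv w k / (2 * w k)) ^ 2
            - (deriv w k) ^ 2 / 4 * (1 / w k + 1 / 4)
            + deriv (deriv w) k / 2) := by
  have hs0 : ∀ k, Real.sqrt (w k) ≠ 0 := fun k => (Real.sqrt_pos.2 (hwpos k)).ne'
  have hsq : ∀ k, Real.sqrt (w k) ^ 2 = w k := fun k => Real.sq_sqrt (hwpos k).le
  have hs : ∀ k, HasDerivAt (fun k => Real.sqrt (w k)) (deriv w k / (2 * Real.sqrt (w k))) k :=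
    fun k => (hw1 k).hasDerivAt.sqrt (hwpos k).ne'
  have hq : ∀ k, HasDerivAt (fun k : ℝ => -k / Real.sqrt (w k))
      ((-1 * Real.sqrt (w k) - -k * (deriv w k / (2 * Real.sqrt (w k)))) / Real.sqrt (w k) ^ 2) k :=
    fun k => (hasDerivAt_id k).neg.div (hs k) (hs0 k)
  have hp : ∀ k, HasDerivAt (fun k => dplus k (w k)) _ k := fun k => (hq k).add ((hs k).div_const 2)
  have hm : ∀ k, HasDerivAt (fun k => dminus k (w k)) _ k := fun k => (hq k).sub ((hs k).div_const 2)
  have hrel : ∀ k, Real.exp k * gauss (dminus k (w k)) = gauss (dplus k (w k)) := by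
    intro k
    unfold gauss
    rw [← mul_div_assoc, ← Real.exp_add]
    congr 2
    unfold dplus dminus
    have := hs0 k
    field_simp
    ring
  have hC : ∀ k, HasDerivAt (fun k => CBS F k (w k))
      (F * (gauss (dplus k (w k)) * (deriv w k / (2 * Real.sqrt (w k)))
        - Real.exp k * normCdf (dminus k (w k)))) k := by
    intro k
    have h := ((((hasDerivAt_normCdf _).comp k (hp k)).sub
      ((Real.hasDerivAt_exp k).mul ((hasDerivAt_normCdf _).comp k (hm k)))).const_mul F)
    refine h.congr_deriv ?_
    simp only [Function.comp_apply]
    rw [← hrel k]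
    ring
  have hCd : deriv (fun k => CBS F k (w k)) = fun k =>
      (F * (gauss (dplus k (w k)) * (deriv w k / (2 * Real.sqrt (w k)))
        - Real.exp k * normCdf (dminus k (w k)))) := funext fun k => (hC k).deriv
  have hC2 : ∀ k, HasDerivAt (fun k =>
      (F * (gauss (dplus k (w k)) * (deriv w k / (2 * Real.sqrt (w k)))
        - Real.exp k * normCdf (dminus k (w k))))) _ k := fun k =>
    (((((hasDerivAt_gauss _).comp k (hp k)).mul
      ((hw2 k).hasDerivAt.div ((hs k).const_mul 2) (mul_ne_zero two_ne_zero (hs0 k)))).sub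
      ((Real.hasDerivAt_exp k).mul ((hasDerivAt_normCdf _).comp k (hm k)))).const_mul F)
  rw [hCd]
  refine ⟨fun k => (hC k).differentiableAt, fun k => (hC2 k).differentiableAt, fun k => ?_⟩
  rw [(hC2 k).deriv]
  simp only [Function.comp_apply, Pi.div_apply]
  have e : ∀ x, Real.exp k * (gauss (dminus k (w k)) * x) = gauss (dplus k (w k)) * x := by
    intro x
    rw [← mul_assoc, hrel]
  rw [e]
  generalize gauss (dplus k (w k)) = G
  unfold dplus
  have h0 := hs0 k
  have h2 := hsq k
  generalize normCdf (dminus k (w k)) = M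
  generalize Real.sqrt (w k) = s at *
  rw [← h2]
  field_simp
  ring
end

section
/- Fix λ > 0 and define φ(θ) := (1/(λ·θ))·(1 − (1 − exp(−λ·θ))/(λ·θ)) for θ > 0. Then the function θ ↦ θ·φ(θ) is differentiable on (0,∞) with derivative d/dθ(θ·φ(θ)) = exp(−λ·θ)·(exp(λ·θ) − 1 − λ·θ)/(λ²·θ²), this derivative is strictly positive for every θ > 0, and consequently θ ↦ θ·φ(θ) is strictly monotonically increasing on (0,∞). -/
/-- The SSVI map `θ ↦ θ·φ(θ)` with `φ(θ) = (1/(λθ))(1 − (1 − e^{−λθ})/(λθ))` has derivative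
`e^{−λθ}(e^{λθ} − 1 − λθ)/(λ²θ²) > 0` on `(0,∞)`, hence is strictly increasing there. -/
theorem ssvi_theta_phi_strictMono (lam : ℝ) (hlam : 0 < lam) :
    (∀ θ : ℝ, 0 < θ →
      HasDerivAt
        (fun θ : ℝ => θ * (1 / (lam * θ) * (1 - (1 - Real.exp (-(lam * θ))) / (lam * θ))))
        (Real.exp (-(lam * θ)) * (Real.exp (lam * θ) - 1 - lam * θ) / (lam ^ 2 * θ ^ 2)) θ) ∧
    (∀ θ : ℝ, 0 < θ →
      0 < Real.exp (-(lam * θ)) * (Real.exp (lam * θ) - 1 - lam * θ) / (lam ^ 2 * θ ^ 2)) ∧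
    StrictMonoOn
      (fun θ : ℝ => θ * (1 / (lam * θ) * (1 - (1 - Real.exp (-(lam * θ))) / (lam * θ))))
      (Set.Ioi 0) := by
  have h1 : ∀ θ : ℝ, 0 < θ →
      HasDerivAt
        (fun θ : ℝ => θ * (1 / (lam * θ) * (1 - (1 - Real.exp (-(lam * θ))) / (lam * θ))))
        (Real.exp (-(lam * θ)) * (Real.exp (lam * θ) - 1 - lam * θ) / (lam ^ 2 * θ ^ 2)) θ := by
    intro θ hθ
    have hx : HasDerivAt (fun t : ℝ => lam * t) lam θ := by
      simpa using (hasDerivAt_id θ).const_mul lam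
    have hne : lam * θ ≠ 0 := (mul_pos hlam hθ).ne'
    have hE : Real.exp (-(lam * θ)) * Real.exp (lam * θ) = 1 := by
      rw [← Real.exp_add]; simp
    have hq := (((hx.fun_neg.exp).const_sub 1).fun_div hx hne).const_sub 1
    have hq2 := hq.const_mul (1 / lam)
    have hfin := hq2.congr_of_eventuallyEq
      (f₁ := fun θ : ℝ => θ * (1 / (lam * θ) * (1 - (1 - Real.exp (-(lam * θ))) / (lam * θ)))) (by
        filter_upwards [lt_mem_nhds hθ] with t ht
        have : t * (1 / (lam * t)) = 1 / lam := by
          field_simp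
        rw [← mul_assoc, this])
    refine hfin.congr_deriv ?_
    have e : Real.exp (-(lam * θ)) * (Real.exp (lam * θ) - 1 - lam * θ)
        = 1 - Real.exp (-(lam * θ)) - Real.exp (-(lam * θ)) * (lam * θ) := by
      linear_combination hE
    rw [e]
    generalize Real.exp (-(lam * θ)) = E
    field_simp
    ring
  have h2 : ∀ θ : ℝ, 0 < θ →
      0 < Real.exp (-(lam * θ)) * (Real.exp (lam * θ) - 1 - lam * θ) / (lam ^ 2 * θ ^ 2) := by
    intro θ hθ
    have := Real.add_one_lt_exp (mul_pos hlam hθ).ne'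
    have h : 0 < Real.exp (lam * θ) - 1 - lam * θ := by linarith
    positivity
  refine ⟨h1, h2, ?_⟩
  apply strictMonoOn_of_deriv_pos (convex_Ioi 0)
  · intro t ht
    exact (h1 t ht).continuousAt.continuousWithinAt
  · intro t ht
    rw [interior_Ioi] at ht
    rw [(h1 t ht).deriv]
    exact h2 t ht
end

section
/- Define h(x) := (1 − (1 + x)·exp(−x)) / (exp(−x) + x − 1) for x > 0. Then h is strictly decreasing on (0,∞) and h(x) tends to 1 as x tends to 0 from the right. -/
lemma aux_D_pos {x : ℝ} (hx : 0 < x) : 0 < Real.exp (-x) + x - 1 := by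
  have := Real.add_one_lt_exp (x := -x) (by linarith)
  linarith

lemma aux_N (x : ℝ) : HasDerivAt (fun x : ℝ => 1 - (1 + x) * Real.exp (-x))
    (x * Real.exp (-x)) x := by
  have h := (((hasDerivAt_id x).const_add 1).mul ((hasDerivAt_id x).neg.exp)).const_sub 1
  refine h.congr_deriv ?_
  simp only [id, Pi.neg_apply]
  ring

lemma aux_D (x : ℝ) : HasDerivAt (fun x : ℝ => Real.exp (-x) + x - 1)
    (1 - Real.exp (-x)) x := by
  have h := (((hasDerivAt_id x).neg.exp).add (hasDerivAt_id x)).sub_const 1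
  refine h.congr_deriv ?_
  simp only [id, Pi.neg_apply]
  ring

lemma aux_key {x : ℝ} (hx : 0 < x) : x ^ 2 * Real.exp (-x) < (1 - Real.exp (-x)) ^ 2 := by
  have h : x / 2 < Real.sinh (x / 2) := Real.self_lt_sinh_iff.2 (by linarith)
  rw [Real.sinh_eq] at h
  have e1 : Real.exp (-x) = Real.exp (-(x / 2)) ^ 2 := by
    rw [← Real.exp_nat_mul]; congr 1; push_cast; ring
  have e2 : Real.exp (x / 2) * Real.exp (-(x / 2)) = 1 := by
    rw [← Real.exp_add]; simp
  have hp := Real.exp_pos (-(x / 2))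
  have h2 : x * Real.exp (-(x / 2)) < 1 - Real.exp (-x) := by
    rw [e1]
    nlinarith
  have h3 : x ^ 2 * Real.exp (-x) = (x * Real.exp (-(x / 2))) ^ 2 := by rw [e1]; ring
  rw [h3]
  exact pow_lt_pow_left₀ h2 (by positivity) two_ne_zero

/-- `h(x) = (1 − (1+x)e^{−x})/(e^{−x} + x − 1)` is strictly decreasing on `(0,∞)` and
tends to `1` as `x → 0⁺`. -/
theorem ssvi_h_strictAnti_and_limit :
    StrictAntiOn
      (fun x : ℝ => (1 - (1 + x) * Real.exp (-x)) / (Real.exp (-x) + x - 1)) (Set.Ioi 0) ∧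
    Filter.Tendsto
      (fun x : ℝ => (1 - (1 + x) * Real.exp (-x)) / (Real.exp (-x) + x - 1))
      (nhdsWithin 0 (Set.Ioi 0)) (nhds 1) := by
  constructor
  · have hd : ∀ x : ℝ, 0 < x → HasDerivAt
        (fun x : ℝ => (1 - (1 + x) * Real.exp (-x)) / (Real.exp (-x) + x - 1)) _ x :=
      fun x hx => (aux_N x).div (aux_D x) (aux_D_pos hx).ne'
    apply strictAntiOn_of_deriv_neg (convex_Ioi 0)
    · exact fun x hx => (hd x hx).continuousAt.continuousWithinAt
    · intro x hx
      rw [interior_Ioi] at hx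
      rw [(hd x hx).deriv]
      apply div_neg_of_neg_of_pos
      · have := aux_key hx
        nlinarith
      · have := aux_D_pos hx
        positivity
  · apply HasDerivAt.lhopital_zero_nhdsGT (f' := fun x => x * Real.exp (-x))
      (g' := fun x => 1 - Real.exp (-x))
    · exact Filter.Eventually.of_forall aux_N
    · exact Filter.Eventually.of_forall aux_D
    · filter_upwards [self_mem_nhdsWithin] with x hx
      have : Real.exp (-x) < 1 := Real.exp_lt_one_iff.2 (neg_lt_zero.2 hx)
      linarith
    · have := (aux_N 0).continuousAt.tendsto.mono_left
        (nhdsWithin_le_nhds (s := Set.Ioi (0 : ℝ)))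
      simpa using this
    · have := (aux_D 0).continuousAt.tendsto.mono_left
        (nhdsWithin_le_nhds (s := Set.Ioi (0 : ℝ)))
      simpa using this
    · have h := (Real.hasDerivAt_exp 0).tendsto_slope_zero_right
      have h2 := h.inv₀ (by simp)
      simp only [Real.exp_zero, inv_one, zero_add, smul_eq_mul] at h2
      refine h2.congr' ?_
      filter_upwards [self_mem_nhdsWithin] with x hx
      have h1 : 1 < Real.exp x := Real.one_lt_exp_iff.2 hx
      have hx' : x ≠ 0 := ne_of_gt hx
      have h3 : Real.exp x - 1 ≠ 0 := by linarith
      rw [Real.exp_neg]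
      have h4 : 1 - (Real.exp x)⁻¹ = (Real.exp x - 1) * (Real.exp x)⁻¹ := by
        field_simp
      rw [h4, mul_inv, inv_inv, mul_div_mul_right _ _ (by positivity), div_eq_mul_inv]
end
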